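/- Let q be a prime power, let n ≥ 1, let f(x) = Σ_{i=0}^{k} a_i x^{q^i} ∈ F_{q^n}[x] be a q-polynomial with a_k ≠ 0 and k ≤ n−1, and put g(x) = x^{q^n} − x. Then for 0 ≤ μ ≤ k: the F_q-dimension of the kernel of the F_q-linear transformation of F_{q^n} induced by f equals μ if and only if det(R_{0,q}(f,g)) = det(R_{1,q}(f,g)) = … = det(R_{μ−1,q}(f,g)) = 0 and det(R_{μ,q}(f,g)) ≠ 0. -/

import Mathlib

/-!
Write `g = x^{q^n} - x`. The rows of `R_{m,q}(f,g)` list the coefficients of `x^{q^e}`, `e ≥ m`, of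
the `q`-polynomials `x^{q^s} ∘ f` (`s < n - m`) and `x^{q^s} ∘ g` (`s < k - m`). Hence
`det R_{m,q}(f,g) = 0` iff there are `u`, `v`, not both zero, of `q`-degrees less than `n - m` and
`k - m`, such that `u ∘ f + v ∘ g` has `q`-degree less than `m` (`det_Rmat_eq_zero_iff`).
As `g` vanishes on `F = F_{q^n}`, this combination induces the function `u ∘ f` (`sum_qComb`).

Let `d = dim_q ker f`; then the image of `f` has dimension `n - d`. Two facts are used: a
`q`-polynomial of `q`-degree less than `N` vanishing on an `N`-dimensional subspace is zero, by
counting roots (`qLin_coeff_eq_zero`), and a subspace of dimension less than `N` is annihilated by a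
nonzero `q`-polynomial of `q`-degree less than `N` (`exists_qpoly_vanishing`). They give
`det R_m = 0` for `m < d` (`det_eq_zero_of_lt`) and `det R_d ≠ 0` (`det_ne_zero_of_eq`), so `d` is
the least index with a nonzero determinant.
-/

/-- The `m`-th scalar `q`-subresultant matrix `R_{m,q}(f,g)` of the `q`-polynomials
`f = ∑_{i=0}^k a_i x^{q^i}` and `g = ∑_{i=0}^l b_i x^{q^i}`. -/
noncomputable def Rmat (q k l m : ℕ) {K : Type*} [Field K] (a b : ℕ → K) :
    Matrix (Fin (k + l - 2 * m)) (Fin (k + l - 2 * m)) K :=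
  Matrix.of fun i j =>
    if i.val < l - m then
      if i.val ≤ j.val ∧ j.val ≤ k + i.val then
        a (k + i.val - j.val) ^ q ^ (l - m - 1 - i.val) else 0
    else
      if i.val - (l - m) ≤ j.val ∧ j.val ≤ l + (i.val - (l - m)) then
        b (l + (i.val - (l - m)) - j.val) ^ q ^ (k - m - 1 - (i.val - (l - m))) else 0

/-! ### `q`-polynomials as linear maps -/

open Finset Polynomial in
lemma qpoly_coeff_eq_zero {F : Type*} [Field F] {q : ℕ} (hq : 1 < q) (N : ℕ) (c : ℕ → F)
    (S : Finset F) (hS : q ^ N ≤ S.card)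
    (h : ∀ x ∈ S, ∑ e ∈ range N, c e * x ^ q ^ e = 0) : ∀ e < N, c e = 0 := by
  intro e he
  let P : F[X] := ∑ e ∈ range N, C (c e) * X ^ q ^ e
  have hdeg : P.natDegree < S.card := by
    refine lt_of_le_of_lt (natDegree_sum_le_of_forall_le (n := q ^ (N - 1)) _ _ fun i hi => ?_)
      (lt_of_lt_of_le (Nat.pow_lt_pow_right hq (by omega)) hS)
    exact (natDegree_C_mul_X_pow_le _ _).trans
      (Nat.pow_le_pow_right (by omega) (by have := mem_range.1 hi; omega))
  have hP : P = 0 := eq_zero_of_natDegree_lt_card_of_eval_eq_zero' P S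
    (fun x hx => by simpa [P, eval_finsetSum] using h x hx) hdeg
  have hc : P.coeff (q ^ e) = c e := by
    simp only [P, finsetSum_coeff, coeff_C_mul, coeff_X_pow, Nat.pow_right_inj hq]
    simp [he]
  rw [← hc, hP, coeff_zero]

/-- The `K`-linear endomorphism of `F` induced by the `|K|`-polynomial
`∑_{e < N} c_e x^{|K|^e}`. -/
noncomputable def qLin (K : Type*) {F : Type*} [Field K] [Fintype K] [Field F] [Algebra K F]
    (N : ℕ) (c : ℕ → F) : F →ₗ[K] F :=
  ∑ e ∈ Finset.range N,
    (LinearMap.mulLeft K (c e)) ∘ₗ ((FiniteField.frobeniusAlgHom K F) ^ e).toLinearMap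

lemma frob_pow_apply (K : Type*) {F : Type*} [Field K] [Fintype K] [Field F] [Algebra K F]
    (e : ℕ) (x : F) :
    ((FiniteField.frobeniusAlgHom K F) ^ e) x = x ^ Fintype.card K ^ e := by
  rw [AlgHom.coe_pow, FiniteField.coe_frobeniusAlgHom, pow_iterate]

lemma qLin_apply (K : Type*) {F : Type*} [Field K] [Fintype K] [Field F] [Algebra K F]
    (N : ℕ) (c : ℕ → F) (x : F) :
    qLin K N c x = ∑ e ∈ Finset.range N, c e * x ^ Fintype.card K ^ e := by
  simp only [qLin, LinearMap.sum_apply, LinearMap.comp_apply, AlgHom.toLinearMap_apply,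
    frob_pow_apply, LinearMap.mulLeft_apply]

lemma neg_one_pow_card_pow {K F : Type*} [Field K] [Fintype K] [Field F] [Algebra K F] (s : ℕ) :
    (-1 : F) ^ Fintype.card K ^ s = -1 := by
  rw [← frob_pow_apply K s]; simp

/-! ### Row combinations of the subresultant matrix -/

/-- The coefficient of `x^{q^e}` in `u ∘ f + v ∘ (x^{q^n} - x)`, where `f = ∑_{t ≤ k} a_t x^{q^t}`,
`v = ∑_{s < k - m} W_s x^{q^s}` and `u = ∑_{s < n - m} W_{k - m + s} x^{q^s}`. The single sequence
`W` carries the coefficients of `v` followed by those of `u`. -/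
noncomputable def qComb {F : Type*} [Field F] (q n k m : ℕ) (a W : ℕ → F) (e : ℕ) : F :=
  (∑ s ∈ Finset.range (k - m), W s * (if e = n + s then 1 else if e = s then -1 else 0)) +
  ∑ s ∈ Finset.range (n - m),
    W (k - m + s) * (if s ≤ e ∧ e ≤ k + s then a (e - s) ^ q ^ s else 0)

/-- Column `j` of the subresultant matrix records the coefficients of `x^{q^{k+n-m-1-j}}`, and its
rows read from bottom to top are indexed as the entries of `W`. -/
lemma sum_mul_Rmat {F : Type*} [Field F] (q n k m : ℕ) (hq : ∀ s, (-1 : F) ^ q ^ s = -1)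
    (hq0 : 0 < q) (hmk : m ≤ k) (hkn : k < n) (a W : ℕ → F) (j : Fin (k + n - 2 * m)) :
    ∑ i : Fin (k + n - 2 * m), W (k + n - 2 * m - 1 - i) *
      Rmat q k n m a (fun t => if t = n then 1 else if t = 0 then -1 else 0) i j =
    qComb q n k m a W (k + n - m - 1 - j) := by
  obtain ⟨j, hj⟩ := j
  simp only [Rmat, Matrix.of_apply]
  rw [Fin.sum_univ_eq_sum_range (fun i => W (k + n - 2 * m - 1 - i) *
    (if i < n - m then
      if i ≤ j ∧ j ≤ k + i then
        a (k + i - j) ^ q ^ (n - m - 1 - i) else 0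
    else
      if i - (n - m) ≤ j ∧ j ≤ n + (i - (n - m)) then
        (if n + (i - (n - m)) - j = n then 1
          else if n + (i - (n - m)) - j = 0 then -1 else 0) ^
          q ^ (k - m - 1 - (i - (n - m))) else 0)), ← Finset.sum_range_reflect,
    show k + n - 2 * m = (k - m) + (n - m) by omega, Finset.sum_range_add, qComb]
  congr 1
  · refine Finset.sum_congr rfl fun s hs => ?_
    have hs := Finset.mem_range.1 hs
    rw [if_neg (by omega), show k - m + (n - m) - 1 - (k - m + (n - m) - 1 - s) = s by omega,
      show k - m + (n - m) - 1 - s - (n - m) = k - m - 1 - s by omega,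
      show k - m - 1 - (k - m - 1 - s) = s by omega]
    congr 1
    split_ifs <;> first | omega | simp [hq, hq0.ne']
  · refine Finset.sum_congr rfl fun s hs => ?_
    have hs := Finset.mem_range.1 hs
    rw [if_pos (by omega),
      show k - m + (n - m) - 1 - (k - m + (n - m) - 1 - (k - m + s)) = k - m + s by omega,
      show n - m - 1 - (k - m + (n - m) - 1 - (k - m + s)) = s by omega,
      show k + (k - m + (n - m) - 1 - (k - m + s)) - j = k + n - m - 1 - j - s by omega]
    congr 1
    refine if_congr ?_ rfl rfl
    omega

/-- The determinant vanishes iff some nontrivial combination `u ∘ f + v ∘ (x^{q^n} - x)`, with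
coefficients in `W`, has `q`-degree less than `m`. -/
lemma det_Rmat_eq_zero_iff {F : Type*} [Field F] (q n k m : ℕ)
    (hq : ∀ s, (-1 : F) ^ q ^ s = -1) (hq0 : 0 < q) (hmk : m ≤ k) (hkn : k < n) (a : ℕ → F) :
    (Rmat q k n m a (fun t => if t = n then 1 else if t = 0 then -1 else 0)).det = 0 ↔
      ∃ W : ℕ → F, (∃ t < k + n - 2 * m, W t ≠ 0) ∧
        ∀ e, m ≤ e → e < k + n - m → qComb q n k m a W e = 0 := by
  rw [← Matrix.exists_vecMul_eq_zero_iff]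
  constructor
  · rintro ⟨v, hv, h⟩
    let W : ℕ → F := fun t =>
      if ht : k + n - 2 * m - 1 - t < k + n - 2 * m then v ⟨_, ht⟩ else 0
    have hW : ∀ i : Fin (k + n - 2 * m), W (k + n - 2 * m - 1 - i) = v i := by
      intro i
      have hi := i.2
      simp only [W]
      rw [dif_pos (by omega)]
      congr 1
      ext
      simp only
      omega
    refine ⟨W, ?_, fun e he he' => ?_⟩
    · obtain ⟨i, hi⟩ := Function.ne_iff.1 hv
      exact ⟨k + n - 2 * m - 1 - i, by have := i.2; omega, by rw [hW]; exact hi⟩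
    · have h1 := congrFun h ⟨k + n - m - 1 - e, by omega⟩
      have h2 := sum_mul_Rmat q n k m hq hq0 hmk hkn a W ⟨k + n - m - 1 - e, by omega⟩
      simp only [hW] at h2
      rw [show k + n - m - 1 - (k + n - m - 1 - e) = e by omega] at h2
      rw [← h2]
      exact h1
  · rintro ⟨W, ⟨t, ht, hWt⟩, h⟩
    refine ⟨fun i => W (k + n - 2 * m - 1 - i), ?_, ?_⟩
    · refine Function.ne_iff.2 ⟨⟨k + n - 2 * m - 1 - t, by omega⟩, ?_⟩
      simp only
      rw [show k + n - 2 * m - 1 - (k + n - 2 * m - 1 - t) = t by omega]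
      exact hWt
    · ext j
      have hj := j.2
      exact (sum_mul_Rmat q n k m hq hq0 hmk hkn a W j).trans (h _ (by omega) (by omega))

open Finset in
/-- On `F = F_{q^n}` the polynomial `x^{q^n} - x` vanishes, so `u ∘ f + v ∘ (x^{q^n} - x)` and
`u ∘ f` induce the same function. -/
lemma sum_qComb {K F : Type*} [Field K] [Fintype K] [Field F] [Fintype F] [Algebra K F]
    (n k m : ℕ) (hF : Fintype.card F = Fintype.card K ^ n) (hmk : m ≤ k) (hkn : k < n)
    (a W : ℕ → F) (x : F) :
    ∑ e ∈ range (k + n - m), qComb (Fintype.card K) n k m a W e * x ^ Fintype.card K ^ e =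
      qLin K (n - m) (fun s => W (k - m + s)) (qLin K (k + 1) a x) := by
  set q := Fintype.card K with hqdef
  have hxn : ∀ s, x ^ q ^ (n + s) = x ^ q ^ s := fun s => by
    rw [pow_add, pow_mul, ← hF, FiniteField.pow_card]
  simp only [qComb, add_mul, sum_add_distrib, sum_mul]
  rw [sum_comm, sum_comm (s := range (k + n - m)) (t := range (n - m))]
  have h1 : ∑ s ∈ range (k - m), ∑ e ∈ range (k + n - m),
      W s * (if e = n + s then 1 else if e = s then -1 else 0) * x ^ q ^ e = 0 := by
    refine sum_eq_zero fun s hs => ?_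
    have hs := mem_range.1 hs
    have : ∀ e, W s * (if e = n + s then 1 else if e = s then -1 else 0) * x ^ q ^ e =
        (if n + s = e then W s * x ^ q ^ e else 0) - (if s = e then W s * x ^ q ^ e else 0) := by
      intro e
      split_ifs <;> first | omega | simp
    simp only [this, sum_sub_distrib, sum_ite_eq, mem_range]
    rw [if_pos (by omega), if_pos (by omega), hxn, sub_self]
  rw [h1, zero_add, qLin_apply]
  refine sum_congr rfl fun s hs => ?_
  have hs := mem_range.1 hs
  rw [qLin_apply, ← frob_pow_apply K s (∑ e ∈ range (k + 1), _), map_sum, mul_sum]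
  have h2 : range (k + n - m) = range (s + ((k + 1) + (n - m - 1 - s))) := by
    congr 1; omega
  rw [h2, sum_range_add, sum_range_add _ (k + 1)]
  rw [sum_eq_zero (s := range s), sum_eq_zero (s := range (n - m - 1 - s)), zero_add, add_zero]
  · refine sum_congr rfl fun t ht => ?_
    have ht := mem_range.1 ht
    rw [if_pos (by omega), frob_pow_apply, mul_pow, ← pow_mul, ← pow_add, mul_assoc,
      Nat.add_sub_cancel_left, add_comm s t]
  · intro t _
    rw [if_neg (by omega)]; simp
  · intro t ht
    have ht := mem_range.1 ht
    rw [if_neg (by omega)]; simp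

/-! ### `q`-polynomials vanishing on subspaces -/

/-- A `K`-subspace of dimension less than `N` is annihilated by a nonzero `q`-polynomial of
`q`-degree less than `N`: evaluating on a basis gives fewer than `N` linear equations
over `F` in `N` unknown coefficients. -/
lemma exists_qpoly_vanishing {K F : Type*} [Field K] [Fintype K] [Field F] [Fintype F]
    [Algebra K F] (N : ℕ) (S : Submodule K F) (hS : Module.finrank K S < N) :
    ∃ u : ℕ → F, (∃ s < N, u s ≠ 0) ∧ ∀ x ∈ S, qLin K N u x = 0 := by
  let b := Module.finBasis K S
  let A : (Fin N → F) →ₗ[F] (Fin (Module.finrank K S) → F) :=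
    LinearMap.pi fun i => ∑ s : Fin N,
      ((b i : F) ^ Fintype.card K ^ (s : ℕ)) • LinearMap.proj s
  have hA : LinearMap.ker A ≠ ⊥ := LinearMap.ker_ne_bot_of_finrank_lt (by simpa using hS)
  obtain ⟨v, hv, hv0⟩ := Submodule.exists_mem_ne_zero_of_ne_bot hA
  let u : ℕ → F := fun s => if h : s < N then v ⟨s, h⟩ else 0
  have hu : ∀ s : Fin N, u s = v s := fun s => by simp [u]
  refine ⟨u, ?_, fun x hx => ?_⟩
  · obtain ⟨s, hs⟩ := Function.ne_iff.1 hv0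
    exact ⟨s, s.2, by rw [hu]; exact hs⟩
  · have hb : (qLin K N u) ∘ₗ S.subtype = 0 := by
      refine b.ext fun i => ?_
      have := congrFun (LinearMap.mem_ker.1 hv) i
      simp only [A, LinearMap.pi_apply, LinearMap.sum_apply, LinearMap.smul_apply,
        LinearMap.proj_apply, smul_eq_mul, Pi.zero_apply] at this
      rw [LinearMap.comp_apply, qLin_apply, LinearMap.zero_apply, ← this,
        ← Fin.sum_univ_eq_sum_range (fun s => u s * _ ^ Fintype.card K ^ s)]
      exact Finset.sum_congr rfl fun s _ => by rw [hu, mul_comm]; rfl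
    exact LinearMap.congr_fun hb ⟨x, hx⟩

/-- A `q`-polynomial of `q`-degree less than `N` has fewer than `q^N` roots unless it is zero. -/
lemma qLin_coeff_eq_zero {K F : Type*} [Field K] [Fintype K] [Field F] [Fintype F]
    [Algebra K F] (N : ℕ) (c : ℕ → F) (S : Submodule K F) (hS : N ≤ Module.finrank K S)
    (h : ∀ x ∈ S, qLin K N c x = 0) : ∀ e < N, c e = 0 := by
  classical
  refine qpoly_coeff_eq_zero (q := Fintype.card K) Fintype.one_lt_card N c
    (Finset.univ.filter (· ∈ S)) ?_ fun x hx => ?_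
  · rw [← Fintype.card_subtype, show Fintype.card {x // x ∈ S} = _ from
      Module.card_eq_pow_finrank (K := K) (V := S)]
    exact Nat.pow_le_pow_right Fintype.card_pos hS
  · rw [← qLin_apply]
    exact h x (Finset.mem_filter.1 hx).2

/-! ### Determinants and the dimension of the kernel -/

section Rank

variable {K F : Type*} [Field K] [Fintype K] [Field F] [Fintype F] [Algebra K F]

lemma finrank_eq_of_card {n : ℕ} (hF : Fintype.card F = Fintype.card K ^ n) :
    Module.finrank K F = n := by
  rw [Module.card_eq_pow_finrank (K := K) (V := F)] at hF
  exact Nat.pow_right_injective Fintype.one_lt_card hF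

/-- Below the kernel dimension `d` the determinants vanish: the image of `f` has dimension
`n - d < n - m`, so some `u ≠ 0` of `q`-degree less than `n - m` annihilates it; then `u ∘ f` is
a left multiple of `x^{q^n} - x`. -/
lemma det_eq_zero_of_lt {n k m : ℕ} (hF : Fintype.card F = Fintype.card K ^ n) (hkn : k < n)
    (a : ℕ → F) (hmk : m ≤ k)
    (hm : m < Module.finrank K (LinearMap.ker (qLin K (k + 1) a))) :
    (Rmat (Fintype.card K) k n m a
      (fun t => if t = n then 1 else if t = 0 then -1 else 0)).det = 0 := by
  rw [det_Rmat_eq_zero_iff _ _ _ _ (neg_one_pow_card_pow (K := K)) Fintype.card_pos hmk hkn]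
  have hrn := LinearMap.finrank_range_add_finrank_ker (qLin K (k + 1) a)
  rw [finrank_eq_of_card hF] at hrn
  obtain ⟨u, ⟨s₀, hs₀, hus₀⟩, hu⟩ := exists_qpoly_vanishing (K := K) (n - m)
    (LinearMap.range (qLin K (k + 1) a)) (by omega)
  -- `-v_s` is the coefficient of `x^{q^{n+s}}` in `u ∘ f`, so that the top coefficients cancel.
  let v : ℕ → F := fun s => -∑ s' ∈ Finset.range (n - m),
    u s' * (if s' ≤ n + s ∧ n + s ≤ k + s' then a (n + s - s') ^ Fintype.card K ^ s' else 0)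
  let W : ℕ → F := fun t => if t < k - m then v t else u (t - (k - m))
  have hWu : ∀ s, W (k - m + s) = u s := fun s => by simp [W]
  have htop : ∀ s < k - m, qComb (Fintype.card K) n k m a W (n + s) = 0 := by
    intro s hs
    have h1 : ∑ t ∈ Finset.range (k - m),
        W t * (if n + s = n + t then 1 else if n + s = t then -1 else 0) = v s := by
      rw [Finset.sum_eq_single s]
      · simp [W, hs]
      · intro t ht hts
        have ht := Finset.mem_range.1 ht
        rw [if_neg (by omega), if_neg (by omega), mul_zero]
      · intro h
        exact absurd (Finset.mem_range.2 hs) h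
    simp only [qComb, hWu]
    rw [h1, neg_add_cancel]
  refine ⟨W, ⟨k - m + s₀, by omega, by rw [hWu]; exact hus₀⟩, fun e _ he => ?_⟩
  by_cases hen : n ≤ e
  · obtain ⟨s, rfl⟩ := Nat.exists_eq_add_of_le hen
    exact htop s (by omega)
  · refine qLin_coeff_eq_zero (K := K) n (qComb (Fintype.card K) n k m a W) ⊤
      (by rw [finrank_top, finrank_eq_of_card hF]) (fun x _ => ?_) e (by omega)
    have h := sum_qComb (K := K) n k m hF hmk hkn a W x
    simp only [hWu] at h
    rw [hu _ (LinearMap.mem_range_self _ x), show k + n - m = n + (k - m) by omega,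
      Finset.sum_range_add, Finset.sum_eq_zero (s := Finset.range (k - m)), add_zero] at h
    · rw [qLin_apply, h]
    · intro s hs
      rw [htop s (Finset.mem_range.1 hs), zero_mul]

/-- At the kernel dimension `d` the determinant does not vanish: if `u ∘ f + v ∘ (x^{q^n} - x)`
has `q`-degree less than `d`, it is zero because it vanishes on the `q^d` elements of `ker f`;
hence `u`, of `q`-degree less than `n - d`, vanishes on the image of `f` and is zero, and so
is `v`. -/
lemma det_ne_zero_of_eq {n k m : ℕ} (hF : Fintype.card F = Fintype.card K ^ n) (hkn : k < n)
    (a : ℕ → F) (hmk : m ≤ k)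
    (hm : Module.finrank K (LinearMap.ker (qLin K (k + 1) a)) = m) :
    (Rmat (Fintype.card K) k n m a
      (fun t => if t = n then 1 else if t = 0 then -1 else 0)).det ≠ 0 := by
  rw [Ne, det_Rmat_eq_zero_iff _ _ _ _ (neg_one_pow_card_pow (K := K)) Fintype.card_pos hmk hkn]
  rintro ⟨W, ⟨t, ht, hWt⟩, h⟩
  have hrn := LinearMap.finrank_range_add_finrank_ker (qLin K (k + 1) a)
  rw [finrank_eq_of_card hF] at hrn
  have hsum : ∀ x, qLin K m (qComb (Fintype.card K) n k m a W) x =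
      qLin K (n - m) (fun s => W (k - m + s)) (qLin K (k + 1) a x) := by
    intro x
    rw [← sum_qComb (K := K) n k m hF hmk hkn a W x, qLin_apply,
      show k + n - m = m + (k + n - 2 * m) by omega, Finset.sum_range_add,
      Finset.sum_eq_zero (s := Finset.range (k + n - 2 * m)), add_zero]
    intro s hs
    have hs := Finset.mem_range.1 hs
    rw [h _ (by omega) (by omega), zero_mul]
  have hlow := qLin_coeff_eq_zero (K := K) m (qComb (Fintype.card K) n k m a W)
    (LinearMap.ker (qLin K (k + 1) a)) hm.ge (fun x hx => by
      rw [hsum, LinearMap.mem_ker.1 hx, map_zero])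
  have hu := qLin_coeff_eq_zero (K := K) (n - m) (fun s => W (k - m + s))
    (LinearMap.range (qLin K (k + 1) a)) (by omega) (by
      rintro _ ⟨x, rfl⟩
      rw [← hsum, qLin_apply]
      exact Finset.sum_eq_zero fun e he => by rw [hlow e (Finset.mem_range.1 he), zero_mul])
  by_cases htk : t < k - m
  · have h1 := h (n + t) (by omega) (by omega)
    rw [qComb, Finset.sum_eq_zero (s := Finset.range (n - m)), add_zero,
      Finset.sum_eq_single t] at h1
    · simp [hWt] at h1
    · intro s hs hst
      have hs := Finset.mem_range.1 hs
      rw [if_neg (by omega), if_neg (by omega), mul_zero]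
    · intro h'
      exact absurd (Finset.mem_range.2 htk) h'
    · intro s hs
      rw [hu s (Finset.mem_range.1 hs), zero_mul]
  · have := hu (t - (k - m)) (by omega)
    rw [show k - m + (t - (k - m)) = t by omega] at this
    exact hWt this

end Rank

/-- A field with `(p^e)^n` elements is an algebra over a field with `p^e` elements. -/
lemma exists_subfield_algebra (p e n : ℕ) (hp : p.Prime) (he : 0 < e)
    (F : Type*) [Field F] [Fintype F] (hF : Fintype.card F = (p ^ e) ^ n) (hn : 0 < n) :
    ∃ (K : Type) (_ : Field K) (_ : Fintype K) (_ : Algebra K F), Fintype.card K = p ^ e := by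
  have : Fact p.Prime := ⟨hp⟩
  rw [← pow_mul] at hF
  have hen : 0 < e * n := Nat.mul_pos he hn
  have : CharP F p := charP_of_card_eq_prime_pow hF
  let _ : Algebra (ZMod p) F := ZMod.algebra F p
  have hfin : Module.finrank (ZMod p) F = e * n := by
    rw [Module.card_eq_pow_finrank (K := ZMod p) (V := F), ZMod.card] at hF
    exact Nat.pow_right_injective hp.two_le hF
  obtain ⟨φ⟩ := FiniteField.nonempty_algHom_of_finrank_dvd
    (F := ZMod p) (K := GaloisField p e) (L := F)
    (by rw [GaloisField.finrank p he.ne', hfin]; exact dvd_mul_right _ _)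
  let _ := Fintype.ofFinite (GaloisField p e)
  exact ⟨GaloisField p e, inferInstance, inferInstance, φ.toRingHom.toAlgebra,
    by rw [← Nat.card_eq_fintype_card, GaloisField.card p e he.ne']⟩

/-- Corollary: for a `q`-polynomial `f = ∑_{i=0}^k a_i x^{q^i} ∈ F_{q^n}[x]` with
`a_k ≠ 0`, `k ≤ n-1`, and `g(x) = x^{q^n} - x` (coefficients `b_n = 1`, `b_0 = -1`,
else `0`), and `0 ≤ μ ≤ k`: the `F_q`-dimension of the kernel of the `F_q`-linear map
induced by `f` equals `μ` (i.e. the kernel has `q^μ` elements) iff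
`det R_{0,q}(f,g) = ⋯ = det R_{μ-1,q}(f,g) = 0` and `det R_{μ,q}(f,g) ≠ 0`. -/
theorem stmt_4 (p e q n k : ℕ) (hp : p.Prime) (he : 0 < e) (hq : q = p ^ e)
    (hn : 0 < n) (F : Type*) [Field F] [Fintype F] (hF : Fintype.card F = q ^ n)
    (a : ℕ → F) (hk : k ≤ n - 1) (hak : a k ≠ 0) (μ : ℕ) (hμ : μ ≤ k) :
    Nat.card {x : F // ∑ i ∈ Finset.range (k + 1), a i * x ^ q ^ i = 0} = q ^ μ ↔
      (∀ m, m < μ →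
          (Rmat q k n m a (fun t => if t = n then 1 else if t = 0 then -1 else 0)).det = 0) ∧
        (Rmat q k n μ a (fun t => if t = n then 1 else if t = 0 then -1 else 0)).det ≠ 0 := by
  obtain ⟨K, _, _, _, hK⟩ := exists_subfield_algebra p e n hp he F (by rw [hF, hq]) hn
  rw [← hq] at hK
  subst hK
  have hkn : k < n := by omega
  set d := Module.finrank K (LinearMap.ker (qLin K (k + 1) a)) with hd
  have hcard : Nat.card {x : F // ∑ i ∈ Finset.range (k + 1), a i * x ^ Fintype.card K ^ i = 0} =
      Fintype.card K ^ d := by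
    classical
    rw [hd, ← Module.card_eq_pow_finrank,
      ← Nat.card_eq_fintype_card (α := LinearMap.ker (qLin K (k + 1) a))]
    have hiff : ∀ x : F, ∑ i ∈ Finset.range (k + 1), a i * x ^ Fintype.card K ^ i = 0 ↔
        x ∈ LinearMap.ker (qLin K (k + 1) a) := fun x => by
      rw [LinearMap.mem_ker, qLin_apply]
    exact Nat.card_congr (Equiv.subtypeEquivRight hiff)
  have hdk : d ≤ k := by
    by_contra! hlt
    exact hak (qLin_coeff_eq_zero (K := K) (k + 1) a (LinearMap.ker (qLin K (k + 1) a)) hlt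
      (fun x hx => hx) k (by omega))
  rw [hcard, Nat.pow_right_inj Fintype.one_lt_card]
  constructor
  · intro h
    exact ⟨fun m hm => det_eq_zero_of_lt hF hkn a (by omega) (by omega),
      det_ne_zero_of_eq hF hkn a hμ h⟩
  · rintro ⟨h1, h2⟩
    rcases lt_trichotomy d μ with h | h | h
    · exact absurd (h1 d h) (det_ne_zero_of_eq hF hkn a hdk rfl)
    · exact h
    · exact absurd (det_eq_zero_of_lt hF hkn a hμ h) h2
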